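/- If a and b are terms of Λ of the same type and a = b is not provable in Λ, then for every two terms e and f of the same type one can construct type-instances a′ of a and b′ of b, closed terms h₁, …, h_l (l ≥ 0), and find variables x₁, …, x_m (m ≥ 0), such that (λx₁…x_m.a′)h₁…h_l e f = e and (λx₁…x_m.b′)h₁…h_l e f = f are both provable in Λ. -/

import Mathlib

set_option autoImplicit false

/-- Simple types over a set `ν` of atomic types. -/
inductive Ty (ν : Type) : Type
  | atom : ν → Ty ν
  | arrow : Ty ν → Ty ν → Ty ν

/-- A typing context: the (types of the) free variables. -/
abbrev Ctx (ν : Type) : Type := List (Ty ν)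

/-- Typed de Bruijn variables. -/
inductive Var {ν : Type} : Ctx ν → Ty ν → Type
  | vz {Γ : Ctx ν} {A : Ty ν} : Var (A :: Γ) A
  | vs {Γ : Ctx ν} {A B : Ty ν} : Var Γ A → Var (B :: Γ) A

/-- Typed terms of the simply typed lambda calculus Λ. -/
inductive Tm {ν : Type} : Ctx ν → Ty ν → Type
  | var {Γ : Ctx ν} {A : Ty ν} : Var Γ A → Tm Γ A
  | app {Γ : Ctx ν} {A B : Ty ν} : Tm Γ (Ty.arrow A B) → Tm Γ A → Tm Γ B
  | lam {Γ : Ctx ν} {A B : Ty ν} : Tm (A :: Γ) B → Tm Γ (Ty.arrow A B)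

/-- Renamings between contexts. -/
def Ren {ν : Type} (Γ Δ : Ctx ν) : Type := ∀ A : Ty ν, Var Γ A → Var Δ A

def Ren.ext {ν : Type} {Γ Δ : Ctx ν} (ρ : Ren Γ Δ) (A : Ty ν) : Ren (A :: Γ) (A :: Δ) :=
  fun _ v => match v with
  | .vz => .vz
  | .vs w => .vs (ρ _ w)

def Tm.rename {ν : Type} : ∀ {Γ Δ : Ctx ν} {A : Ty ν}, Ren Γ Δ → Tm Γ A → Tm Δ A
  | _, _, _, ρ, .var v => .var (ρ _ v)
  | _, _, _, ρ, .app f a => .app (f.rename ρ) (a.rename ρ)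
  | _, _, _, ρ, .lam b => .lam (b.rename (ρ.ext _))

/-- Simultaneous substitutions. -/
def Subst {ν : Type} (Γ Δ : Ctx ν) : Type := ∀ A : Ty ν, Var Γ A → Tm Δ A

def Subst.ext {ν : Type} {Γ Δ : Ctx ν} (σ : Subst Γ Δ) (A : Ty ν) :
    ∀ B : Ty ν, Var (A :: Γ) B → Tm (A :: Δ) B
  | _, .vz => .var .vz
  | _, .vs w => (σ _ w).rename (fun _ => Var.vs)

def Tm.subst {ν : Type} : ∀ {Γ Δ : Ctx ν} {A : Ty ν}, Subst Γ Δ → Tm Γ A → Tm Δ A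
  | _, _, _, σ, .var v => σ _ v
  | _, _, _, σ, .app f a => .app (f.subst σ) (a.subst σ)
  | _, _, _, σ, .lam b => .lam (b.subst (Subst.ext σ _))

/-- Extending a substitution with a term for the last variable. -/
def Subst.cons {ν : Type} {Γ Δ : Ctx ν} {A : Ty ν} (b : Tm Δ A) (σ : Subst Γ Δ) :
    ∀ B : Ty ν, Var (A :: Γ) B → Tm Δ B
  | _, .vz => b
  | _, .vs w => σ _ w

/-- Substitution of a single term for the last variable: `a[b/x]`. -/
def Tm.subst1 {ν : Type} {Γ : Ctx ν} {A B : Ty ν} (a : Tm (A :: Γ) B) (b : Tm Γ A) : Tm Γ B :=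
  a.subst (Subst.cons b (fun _ v => .var v))

/-- The theory Λ of βη-equality. -/
inductive Eqv {ν : Type} : ∀ {Γ : Ctx ν} {A : Ty ν}, Tm Γ A → Tm Γ A → Prop
  | refl {Γ : Ctx ν} {A : Ty ν} (a : Tm Γ A) : Eqv a a
  | symm {Γ : Ctx ν} {A : Ty ν} {a b : Tm Γ A} : Eqv a b → Eqv b a
  | trans {Γ : Ctx ν} {A : Ty ν} {a b c : Tm Γ A} : Eqv a b → Eqv b c → Eqv a c
  | congApp {Γ : Ctx ν} {A B : Ty ν} {f g : Tm Γ (Ty.arrow A B)} {a b : Tm Γ A} :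
      Eqv f g → Eqv a b → Eqv (.app f a) (.app g b)
  | congLam {Γ : Ctx ν} {A B : Ty ν} {a b : Tm (A :: Γ) B} :
      Eqv a b → Eqv (.lam a) (.lam b)
  | beta {Γ : Ctx ν} {A B : Ty ν} (a : Tm (A :: Γ) B) (b : Tm Γ A) :
      Eqv (.app (.lam a) b) (a.subst1 b)
  | eta {Γ : Ctx ν} {A B : Ty ν} (a : Tm Γ (Ty.arrow A B)) :
      Eqv (.lam (.app (a.rename (fun _ => Var.vs)) (.var .vz))) a

/-- Substitution of types for the atomic types, on types. -/
def Ty.substA {ν : Type} (σ : ν → Ty ν) : Ty ν → Ty ν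
  | .atom v => σ v
  | .arrow A B => .arrow (A.substA σ) (B.substA σ)

def Var.substA {ν : Type} (σ : ν → Ty ν) :
    ∀ {Γ : Ctx ν} {A : Ty ν}, Var Γ A → Var (Γ.map (Ty.substA σ)) (A.substA σ)
  | _, _, .vz => .vz
  | _, _, .vs v => .vs (v.substA σ)

/-- Substitution of types for the atomic types, on terms: type-instances. -/
def Tm.substA {ν : Type} (σ : ν → Ty ν) :
    ∀ {Γ : Ctx ν} {A : Ty ν}, Tm Γ A → Tm (Γ.map (Ty.substA σ)) (A.substA σ)
  | _, _, .var v => .var (v.substA σ)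
  | _, _, .app f a => .app (f.substA σ) (a.substA σ)
  | _, _, .lam b => .lam (b.substA σ)

/-- `Ty.arrs [A₁, …, Aₘ] B = Aₘ → (… → (A₁ → B))` : the type of `λx₁…xₘ.a`. -/
def Ty.arrs {ν : Type} : Ctx ν → Ty ν → Ty ν
  | [], B => B
  | A :: Γ, B => Ty.arrs Γ (Ty.arrow A B)

/-- λ-abstracting all the free variables of a term. -/
def Tm.lamAll {ν : Type} : ∀ {Γ : Ctx ν} {A : Ty ν}, Tm Γ A → Tm [] (Ty.arrs Γ A)
  | [], _, a => a
  | _ :: Γ, _, a => Tm.lamAll (Γ := Γ) (Tm.lam a)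

/-- `Ty.arrsR [B₁, …, Bₙ] C = B₁ → (… → (Bₙ → C))`. -/
def Ty.arrsR {ν : Type} : List (Ty ν) → Ty ν → Ty ν
  | [], C => C
  | B :: Bs, C => Ty.arrow B (Ty.arrsR Bs C)

/-- A list of terms `h₁ : B₁, …, hₙ : Bₙ` in context `Δ`. -/
inductive HList {ν : Type} (Δ : Ctx ν) : List (Ty ν) → Type
  | nil : HList Δ []
  | cons {B : Ty ν} {Bs : List (Ty ν)} : Tm Δ B → HList Δ Bs → HList Δ (B :: Bs)

/-- Iterated application `t h₁ … hₙ`. -/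
def HList.apps {ν : Type} {Δ : Ctx ν} :
    ∀ {Bs : List (Ty ν)} {C : Ty ν}, HList Δ Bs → Tm Δ (Ty.arrsR Bs C) → Tm Δ C
  | _, _, .nil, t => t
  | _, _, .cons h hs, t => HList.apps hs (t.app h)

/-- Iterated application `t h₁ … hₙ`. -/
def Tm.apps {ν : Type} {Δ : Ctx ν} {Bs : List (Ty ν)} {C : Ty ν}
    (t : Tm Δ (Ty.arrsR Bs C)) (hs : HList Δ Bs) : Tm Δ C :=
  hs.apps t

/-- Weakening of a closed term into an arbitrary context. -/
def Var.elim0 {ν : Type} {A : Ty ν} {C : Sort*} : Var ([] : Ctx ν) A → C :=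
  fun v => nomatch v

def Tm.wk {ν : Type} {Δ : Ctx ν} {A : Ty ν} (t : Tm ([] : Ctx ν) A) : Tm Δ A :=
  t.rename (fun _ v => v.elim0)

attribute [reducible] Ren Subst

/-! ### Substitution calculus -/

section Calculus
variable {ν : Type}

theorem Ren.ext_comp {Γ Δ Θ : Ctx ν} (ρ : Ren Γ Δ) (ρ' : Ren Δ Θ) (A : Ty ν) :
    (fun B v => (ρ'.ext A) B ((ρ.ext A) B v)) = Ren.ext (fun B v => ρ' B (ρ B v)) A := by
  funext B v; cases v <;> rfl

theorem Tm.rename_rename {Γ Δ Θ : Ctx ν} {A : Ty ν} (t : Tm Γ A) (ρ : Ren Γ Δ) (ρ' : Ren Δ Θ) :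
    (t.rename ρ).rename ρ' = t.rename (fun B v => ρ' B (ρ B v)) := by
  induction t generalizing Δ Θ with
  | var v => rfl
  | app f a ihf iha => simp only [Tm.rename, ihf, iha]
  | lam b ih => simp only [Tm.rename, ih, Ren.ext_comp]

theorem Ren.ext_id {Γ : Ctx ν} (A : Ty ν) :
    Ren.ext (fun (B : Ty ν) (v : Var Γ B) => v) A = fun _ v => v := by
  funext B v; cases v <;> rfl

theorem Tm.rename_id {Γ : Ctx ν} {A : Ty ν} (t : Tm Γ A) :
    t.rename (fun _ v => v) = t := by
  induction t with
  | var v => rfl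
  | app f a ihf iha => simp only [Tm.rename, ihf, iha]
  | lam b ih => simp only [Tm.rename, Ren.ext_id, ih]

theorem Subst.ext_ren {Γ Δ Θ : Ctx ν} (ρ : Ren Γ Δ) (σ : Subst Δ Θ) (A : Ty ν) :
    (fun B v => (Subst.ext σ A) B ((ρ.ext A) B v))
      = Subst.ext (fun B v => σ B (ρ B v)) A := by
  funext B v; cases v <;> rfl

theorem Tm.subst_rename {Γ Δ Θ : Ctx ν} {A : Ty ν} (t : Tm Γ A) (ρ : Ren Γ Δ) (σ : Subst Δ Θ) :
    (t.rename ρ).subst σ = t.subst (fun B v => σ B (ρ B v)) := by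
  induction t generalizing Δ Θ with
  | var v => rfl
  | app f a ihf iha => simp only [Tm.rename, Tm.subst, ihf, iha]
  | lam b ih => simp only [Tm.rename, Tm.subst, ih, Subst.ext_ren]

theorem Ren.ext_subst {Γ Δ Θ : Ctx ν} (σ : Subst Γ Δ) (ρ : Ren Δ Θ) (A : Ty ν) :
    (fun B v => ((Subst.ext σ A) B v).rename (ρ.ext A))
      = Subst.ext (fun B v => (σ B v).rename ρ) A := by
  funext B v
  cases v with
  | vz => rfl
  | vs w => simp only [Subst.ext, Tm.rename_rename]; rfl

theorem Tm.rename_subst {Γ Δ Θ : Ctx ν} {A : Ty ν} (t : Tm Γ A) (σ : Subst Γ Δ) (ρ : Ren Δ Θ) :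
    (t.subst σ).rename ρ = t.subst (fun B v => (σ B v).rename ρ) := by
  induction t generalizing Δ Θ with
  | var v => rfl
  | app f a ihf iha => simp only [Tm.rename, Tm.subst, ihf, iha]
  | lam b ih => simp only [Tm.rename, Tm.subst, ih, Ren.ext_subst]

theorem Subst.ext_subst {Γ Δ Θ : Ctx ν} (σ : Subst Γ Δ) (τ : Subst Δ Θ) (A : Ty ν) :
    (fun B v => ((Subst.ext σ A) B v).subst (Subst.ext τ A))
      = Subst.ext (fun B v => (σ B v).subst τ) A := by
  funext B v
  cases v with
  | vz => rfl
  | vs w => simp only [Subst.ext, Tm.subst_rename, Tm.rename_subst]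

theorem Tm.subst_subst {Γ Δ Θ : Ctx ν} {A : Ty ν} (t : Tm Γ A) (σ : Subst Γ Δ) (τ : Subst Δ Θ) :
    (t.subst σ).subst τ = t.subst (fun B v => (σ B v).subst τ) := by
  induction t generalizing Δ Θ with
  | var v => rfl
  | app f a ihf iha => simp only [Tm.subst, ihf, iha]
  | lam b ih => simp only [Tm.subst, ih, Subst.ext_subst]

theorem Subst.ext_var {Γ : Ctx ν} (A : Ty ν) :
    Subst.ext (fun (B : Ty ν) (v : Var Γ B) => Tm.var v) A = fun _ v => Tm.var v := by
  funext B v; cases v <;> rfl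

theorem Tm.subst_var {Γ : Ctx ν} {A : Ty ν} (t : Tm Γ A) :
    t.subst (fun _ v => .var v) = t := by
  induction t with
  | var v => rfl
  | app f a ihf iha => simp only [Tm.subst, ihf, iha]
  | lam b ih => simp only [Tm.subst, Subst.ext_var, ih]

/-- Substituting a weakened term. -/
theorem Tm.subst1_weaken {Γ : Ctx ν} {A B : Ty ν} (t : Tm Γ B) (s : Tm Γ A) :
    (t.rename (fun _ => Var.vs)).subst1 s = t := by
  unfold Tm.subst1
  rw [Tm.subst_rename]
  exact t.subst_var

theorem Tm.subst1_ext {Γ Δ : Ctx ν} {A B : Ty ν} (b : Tm (A :: Γ) B) (σ : Subst Γ Δ)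
    (s : Tm Δ A) : (b.subst (Subst.ext σ A)).subst1 s = b.subst (Subst.cons s σ) := by
  unfold Tm.subst1
  rw [Tm.subst_subst]
  congr 1
  funext B v
  cases v with
  | vz => rfl
  | vs w => exact Tm.subst1_weaken _ _

theorem Tm.subst1_rename_ext {Γ Δ : Ctx ν} {A B : Ty ν} (b : Tm (A :: Γ) B) (ρ : Ren Γ Δ)
    (s : Tm Γ A) : (b.rename (ρ.ext A)).subst1 (s.rename ρ) = (b.subst1 s).rename ρ := by
  unfold Tm.subst1
  rw [Tm.subst_rename, Tm.rename_subst]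
  congr 1
  funext B v
  cases v <;> rfl

theorem Eqv.rename {Γ Δ : Ctx ν} {A : Ty ν} {a b : Tm Γ A} (h : Eqv a b) (ρ : Ren Γ Δ) :
    Eqv (a.rename ρ) (b.rename ρ) := by
  induction h generalizing Δ with
  | refl a => exact .refl _
  | symm _ ih => exact .symm (ih ρ)
  | trans _ _ ih1 ih2 => exact .trans (ih1 ρ) (ih2 ρ)
  | congApp _ _ ih1 ih2 => exact .congApp (ih1 ρ) (ih2 ρ)
  | congLam _ ih => exact .congLam (ih _)
  | beta a b =>
    rw [← Tm.subst1_rename_ext]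
    exact .beta _ _
  | eta a =>
    have := Eqv.eta (a.rename ρ)
    rw [Tm.rename_rename] at this
    simp only [Tm.rename, Tm.rename_rename]
    exact this

theorem Tm.closed_subst {A : Ty ν} (t : Tm ([] : Ctx ν) A) (σ : Subst [] []) :
    t.subst σ = t := by
  have : σ = fun _ v => .var v := by funext B v; exact nomatch v
  rw [this, Tm.subst_var]

theorem Tm.wk_subst {Δ Θ : Ctx ν} {A : Ty ν} (t : Tm ([] : Ctx ν) A) (σ : Subst Δ Θ) :
    (t.wk : Tm Δ A).subst σ = t.wk := by
  unfold Tm.wk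
  rw [Tm.subst_rename]
  conv_rhs => rw [← Tm.subst_var t, Tm.rename_subst]
  congr 1
  funext B v; exact nomatch v

theorem Tm.wk_nil {A : Ty ν} (t : Tm ([] : Ctx ν) A) : (t.wk : Tm [] A) = t := by
  unfold Tm.wk
  conv_rhs => rw [← Tm.rename_id t]
  congr 1
  funext B v; exact nomatch v

theorem Tm.wk_subst1 {Γ : Ctx ν} {A B : Ty ν} (t : Tm ([] : Ctx ν) A) (s : Tm Γ B) :
    (t.wk : Tm (B :: Γ) A).subst1 s = t.wk := Tm.wk_subst _ _

end Calculus

/-! ### Normalization -/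

section Normalization
variable {ν : Type}

/-- Long normal forms (`true`) and neutral terms (`false`). -/
inductive NF : ∀ {Γ : Ctx ν} {A : Ty ν}, Bool → Tm Γ A → Prop
  | var {Γ : Ctx ν} {A : Ty ν} (v : Var Γ A) : NF false (.var v)
  | app {Γ : Ctx ν} {A B : Ty ν} {f : Tm Γ (Ty.arrow A B)} {a : Tm Γ A} :
      NF false f → NF true a → NF false (.app f a)
  | base {Γ : Ctx ν} {p : ν} {t : Tm Γ (Ty.atom p)} : NF false t → NF true t
  | lam {Γ : Ctx ν} {A B : Ty ν} {b : Tm (A :: Γ) B} : NF true b → NF true (.lam b)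

theorem NF.rename {Γ Δ : Ctx ν} {A : Ty ν} {k : Bool} {t : Tm Γ A} (h : NF k t)
    (ρ : Ren Γ Δ) : NF k (t.rename ρ) := by
  induction h generalizing Δ with
  | var v => exact .var _
  | app _ _ ih1 ih2 => exact .app (ih1 ρ) (ih2 ρ)
  | base _ ih => exact .base (ih ρ)
  | lam _ ih => exact .lam (ih _)

/-- The reducibility predicate. -/
def Red : ∀ (A : Ty ν) (Γ : Ctx ν), Tm Γ A → Prop
  | .atom _, _, t => ∃ n, NF false n ∧ Eqv t n
  | .arrow A B, Γ, t => ∀ (Δ : Ctx ν) (ρ : Ren Γ Δ) (s : Tm Δ A), Red A Δ s →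
      Red B Δ ((t.rename ρ).app s)

theorem Red.eqv {A : Ty ν} {Γ : Ctx ν} {t t' : Tm Γ A} (e : Eqv t t') (h : Red A Γ t) :
    Red A Γ t' := by
  induction A generalizing Γ with
  | atom p =>
    obtain ⟨n, hn, hn'⟩ := h
    exact ⟨n, hn, .trans (.symm e) hn'⟩
  | arrow A B _ ihB =>
    intro Δ ρ s hs
    exact ihB (.congApp (e.rename ρ) (.refl _)) (h Δ ρ s hs)

theorem Red.rename {A : Ty ν} {Γ Δ : Ctx ν} {t : Tm Γ A} (h : Red A Γ t) (ρ : Ren Γ Δ) :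
    Red A Δ (t.rename ρ) := by
  cases A with
  | atom p =>
    obtain ⟨n, hn, hn'⟩ := h
    exact ⟨n.rename ρ, hn.rename ρ, hn'.rename ρ⟩
  | arrow A B =>
    intro Θ ρ' s hs
    rw [Tm.rename_rename]
    exact h Θ _ s hs

theorem Red.both (A : Ty ν) :
    (∀ (Γ : Ctx ν) (t : Tm Γ A), Red A Γ t → ∃ n, NF true n ∧ Eqv t n) ∧
    (∀ (Γ : Ctx ν) (t : Tm Γ A), NF false t → Red A Γ t) := by
  induction A with
  | atom p =>
    refine ⟨?_, ?_⟩
    · rintro Γ t ⟨n, hn, e⟩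
      exact ⟨n, .base hn, e⟩
    · intro Γ t h
      exact ⟨t, h, .refl _⟩
  | arrow A B ihA ihB =>
    refine ⟨?_, ?_⟩
    · intro Γ t h
      obtain ⟨n, hn, e⟩ := ihB.1 _ _ (h (A :: Γ) (fun _ => Var.vs) (.var .vz)
        (ihA.2 _ _ (.var _)))
      exact ⟨.lam n, .lam hn, .trans (.symm (.eta t)) (.congLam e)⟩
    · intro Γ t h Δ ρ s hs
      obtain ⟨n, hn, e⟩ := ihA.1 _ _ hs
      exact Red.eqv (.congApp (.refl _) (.symm e)) (ihB.2 _ _ (.app (h.rename ρ) hn))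

theorem Red.fund {Γ Δ : Ctx ν} {A : Ty ν} (t : Tm Γ A) (σ : Subst Γ Δ)
    (hσ : ∀ B v, Red B Δ (σ B v)) : Red A Δ (t.subst σ) := by
  induction t generalizing Δ with
  | var v => exact hσ _ v
  | app f a ihf iha =>
    have := ihf σ hσ Δ (fun _ v => v) _ (iha σ hσ)
    rw [Tm.rename_id] at this
    exact this
  | lam b ih =>
    intro Θ ρ s hs
    rw [Tm.rename_subst]
    refine Red.eqv (.symm (.beta _ _)) ?_
    rw [Tm.subst1_ext]
    refine ih _ ?_
    intro B v
    cases v with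
    | vz => exact hs
    | vs w => exact (hσ _ w).rename ρ

theorem exists_nf {Γ : Ctx ν} {A : Ty ν} (t : Tm Γ A) : ∃ n, NF true n ∧ Eqv t n := by
  refine (Red.both A).1 _ _ ?_
  rw [← Tm.subst_var t]
  exact Red.fund t _ (fun B v => (Red.both B).2 _ _ (.var v))

end Normalization

/-! ### Full type structures -/

section Semantics
variable {ν : Type}

/-- The full type structure over `X`. -/
def Sem (X : Type) : Ty ν → Type
  | .atom _ => X
  | .arrow A B => Sem X A → Sem X B

/-- Environments. -/
abbrev Env (X : Type) (Γ : Ctx ν) : Type := ∀ A : Ty ν, Var Γ A → Sem X A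

def Env.cons {X : Type} {Γ : Ctx ν} {A : Ty ν} (d : Sem X A) (ρ : Env X Γ) :
    ∀ B : Ty ν, Var (A :: Γ) B → Sem X B
  | _, .vz => d
  | _, .vs w => ρ _ w

def Tm.eval {X : Type} : ∀ {Γ : Ctx ν} {A : Ty ν}, Tm Γ A → Env X Γ → Sem X A
  | _, _, .var v, ρ => ρ _ v
  | _, _, .app f a, ρ => (f.eval ρ : Sem X _ → Sem X _) (a.eval ρ)
  | _, _, .lam b, ρ => fun d => b.eval (Env.cons d ρ)

theorem Tm.eval_rename {X : Type} {Γ Δ : Ctx ν} {A : Ty ν} (t : Tm Γ A) (r : Ren Γ Δ)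
    (ρ : Env X Δ) : (t.rename r).eval ρ = t.eval (fun B v => ρ B (r B v)) := by
  induction t generalizing Δ with
  | var v => rfl
  | app f a ihf iha => simp only [Tm.rename, Tm.eval, ihf, iha]
  | lam b ih =>
    simp only [Tm.rename, Tm.eval, ih]
    funext d
    congr 1
    funext B v
    cases v <;> rfl

theorem Tm.eval_subst {X : Type} {Γ Δ : Ctx ν} {A : Ty ν} (t : Tm Γ A) (σ : Subst Γ Δ)
    (ρ : Env X Δ) : (t.subst σ).eval ρ = t.eval (fun B v => (σ B v).eval ρ) := by
  induction t generalizing Δ with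
  | var v => rfl
  | app f a ihf iha => simp only [Tm.subst, Tm.eval, ihf, iha]
  | lam b ih =>
    simp only [Tm.subst, Tm.eval, ih]
    funext d
    congr 1
    funext B v
    cases v with
    | vz => rfl
    | vs w => simp only [Subst.ext, Tm.eval_rename]; rfl

theorem Eqv.eval {X : Type} {Γ : Ctx ν} {A : Ty ν} {a b : Tm Γ A} (h : Eqv a b)
    (ρ : Env X Γ) : a.eval ρ = b.eval ρ := by
  induction h with
  | refl a => rfl
  | symm _ ih => exact (ih ρ).symm
  | trans _ _ ih1 ih2 => exact (ih1 ρ).trans (ih2 ρ)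
  | congApp _ _ ih1 ih2 => simp only [Tm.eval, ih1, ih2]
  | congLam _ ih => simp only [Tm.eval, ih]; rfl
  | beta a b =>
    unfold Tm.subst1
    rw [Tm.eval_subst]
    simp only [Tm.eval]
    congr 1
    funext B v
    cases v <;> rfl
  | eta a =>
    simp only [Tm.eval, Tm.eval_rename]
    rfl

theorem Sem.finite (X : Type) [Finite X] (A : Ty ν) : Finite (Sem X A) := by
  induction A with
  | atom p => assumption
  | arrow A B ihA ihB => exact (inferInstance : Finite (Sem X A → Sem X B))

/-! ### Finite completeness -/

/-- Untyped codes of terms, with de Bruijn levels. -/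
inductive NTree (ν : Type) : Type
  | var : ℕ → NTree ν
  | app : Ty ν → NTree ν → NTree ν → NTree ν
  | lam : NTree ν → NTree ν

def Var.level : ∀ {Γ : Ctx ν} {A : Ty ν}, Var Γ A → ℕ
  | _ :: Γ, _, .vz => Γ.length
  | _, _, .vs v => v.level

theorem Var.level_lt {Γ : Ctx ν} {A : Ty ν} (v : Var Γ A) : v.level < Γ.length := by
  induction v with
  | vz => simp [Var.level]
  | vs v ih => simp only [Var.level, List.length_cons]; omega

theorem Var.level_inj {Γ : Ctx ν} {A : Ty ν} (v w : Var Γ A) (h : v.level = w.level) :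
    v = w := by
  induction v with
  | vz =>
    cases w with
    | vz => rfl
    | vs w => have := w.level_lt; simp only [Var.level] at h; omega
  | vs v ih =>
    cases w with
    | vz => have := v.level_lt; simp only [Var.level] at h; omega
    | vs w => rw [ih w h]

def Tm.enc : ∀ {Γ : Ctx ν} {A : Ty ν}, Tm Γ A → NTree ν
  | _, _, .var v => .var v.level
  | _, _, .app (A := A) f a => .app A f.enc a.enc
  | _, _, .lam b => .lam b.enc

theorem Tm.enc_inj {Γ : Ctx ν} {A : Ty ν} (t s : Tm Γ A) (h : t.enc = s.enc) : t = s := by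
  induction t with
  | var v =>
    cases s with
    | var w => simp only [Tm.enc, NTree.var.injEq] at h; rw [Var.level_inj v w h]
    | app f a => simp [Tm.enc] at h
    | lam b => simp [Tm.enc] at h
  | app f a ihf iha =>
    cases s with
    | var w => simp [Tm.enc] at h
    | app f' a' =>
      simp only [Tm.enc, NTree.app.injEq] at h
      obtain ⟨rfl, h1, h2⟩ := h
      rw [ihf _ h1, iha _ h2]
    | lam b => simp [Tm.enc] at h
  | lam b ih =>
    cases s with
    | var w => simp [Tm.enc] at h
    | app f a => simp [Tm.enc] at h
    | lam b' =>
      simp only [Tm.enc, NTree.lam.injEq] at h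
      rw [ih _ h]

/-- The data needed for reading normal forms back. -/
structure Alg (ν J Q : Type) where
  v : J → Q
  ap : Ty ν → Q → Q → Q
  lm : Q → Q
  zero : J
  succ : J → J

variable {J Q : Type} (M : Alg ν J Q)

def Alg.idx : ℕ → J
  | 0 => M.zero
  | n + 1 => M.succ (Alg.idx n)

def Alg.fold : NTree ν → Q
  | .var n => M.v (M.idx n)
  | .app A s t => M.ap A (Alg.fold s) (Alg.fold t)
  | .lam t => M.lm (Alg.fold t)

/-- Reification and reflection. -/
def Alg.rr : ∀ A : Ty ν, (Sem (J → Q) A → J → Q) × ((J → Q) → Sem (J → Q) A)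
  | .atom _ => (fun x => x, fun x => x)
  | .arrow A B =>
    (fun F j => M.lm ((Alg.rr B).1
        ((F : Sem (J → Q) A → Sem (J → Q) B) ((Alg.rr A).2 (fun _ => M.v j))) (M.succ j)),
      fun u => (fun a => (Alg.rr B).2 (fun j => M.ap A (u j) ((Alg.rr A).1 a j)) :
        Sem (J → Q) A → Sem (J → Q) B))

def Alg.std (Γ : Ctx ν) : Env (J → Q) Γ := fun A v => (M.rr A).2 (fun _ => M.v (M.idx v.level))

theorem Alg.std_cons (Γ : Ctx ν) (A : Ty ν) :
    M.std (A :: Γ) = Env.cons ((M.rr A).2 (fun _ => M.v (M.idx Γ.length))) (M.std Γ) := by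
  funext B v
  cases v <;> rfl

theorem Alg.read {Γ : Ctx ν} {A : Ty ν} {k : Bool} {t : Tm Γ A} (h : NF k t) :
    (k = false → ∃ u : J → Q, t.eval (M.std Γ) = (M.rr A).2 u ∧
      u (M.idx Γ.length) = M.fold t.enc) ∧
    (k = true → (M.rr A).1 (t.eval (M.std Γ)) (M.idx Γ.length) = M.fold t.enc) := by
  induction h with
  | var v => exact ⟨fun _ => ⟨_, rfl, rfl⟩, fun h => by simp at h⟩
  | @app Γ A B f a _ _ ih1 ih2 =>
    refine ⟨fun _ => ?_, fun h => by simp at h⟩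
    obtain ⟨u, hu, hu'⟩ := ih1.1 rfl
    have h2 := ih2.2 rfl
    refine ⟨fun j => M.ap A (u j) ((M.rr A).1 (a.eval (M.std Γ)) j), ?_, ?_⟩
    · simp only [Tm.eval]
      rw [hu]
      rfl
    · simp only [Tm.enc, Alg.fold]
      rw [hu', h2]
  | base _ ih =>
    refine ⟨fun h => by simp at h, fun _ => ?_⟩
    obtain ⟨u, hu, hu'⟩ := ih.1 rfl
    rw [hu]
    exact hu'
  | @lam Γ A B b _ ih =>
    refine ⟨fun h => by simp at h, fun _ => ?_⟩
    have h2 := ih.2 rfl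
    rw [M.std_cons] at h2
    simp only [Tm.enc, Alg.fold]
    rw [← h2]
    rfl

def NTree.subs : NTree ν → List (NTree ν)
  | .var n => [.var n]
  | .app A s t => .app A s t :: (s.subs ++ t.subs)
  | .lam t => .lam t :: t.subs

theorem NTree.self_mem (t : NTree ν) : t ∈ t.subs := by cases t <;> simp [NTree.subs]

theorem NTree.subs_app {r : NTree ν} {A : Ty ν} {s t : NTree ν} (h : .app A s t ∈ r.subs) :
    s ∈ r.subs ∧ t ∈ r.subs := by
  induction r with
  | var n => simp [NTree.subs] at h
  | app B r1 r2 ih1 ih2 =>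
    simp only [NTree.subs, List.mem_cons, NTree.app.injEq, List.mem_append] at h ⊢
    have := NTree.self_mem s
    have := NTree.self_mem t
    rcases h with ⟨rfl, rfl, rfl⟩ | h | h <;> tauto
  | lam r ih =>
    simp only [NTree.subs, List.mem_cons, reduceCtorEq, false_or] at h ⊢
    tauto

theorem NTree.subs_lam {r : NTree ν} {t : NTree ν} (h : .lam t ∈ r.subs) :
    t ∈ r.subs := by
  induction r with
  | var n => simp [NTree.subs] at h
  | app B r1 r2 ih1 ih2 =>
    simp only [NTree.subs, List.mem_cons, reduceCtorEq, false_or, List.mem_append] at h ⊢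
    tauto
  | lam r ih =>
    simp only [NTree.subs, List.mem_cons, NTree.lam.injEq] at h ⊢
    have := NTree.self_mem t
    rcases h with rfl | h <;> tauto

def NTree.bound : NTree ν → ℕ
  | .var n => n
  | .app _ s t => max s.bound t.bound
  | .lam t => t.bound

theorem NTree.subs_var {r : NTree ν} {n : ℕ} (h : .var n ∈ r.subs) : n ≤ r.bound := by
  induction r with
  | var m => simp [NTree.subs] at h; simp [NTree.bound, h]
  | app B r1 r2 ih1 ih2 =>
    simp only [NTree.subs, List.mem_cons, reduceCtorEq, false_or, List.mem_append] at h
    simp only [NTree.bound, le_max_iff]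
    tauto
  | lam r ih =>
    simp only [NTree.subs, List.mem_cons, reduceCtorEq, false_or] at h
    exact ih h

open Classical in
noncomputable def mkS (S : Set (NTree ν)) (t : NTree ν) : Option S :=
  if h : t ∈ S then some ⟨t, h⟩ else none

noncomputable def algS (S : Set (NTree ν)) (K : ℕ) : Alg ν (Fin (K + 1)) (Option S) where
  v j := mkS S (.var j)
  ap A p q := p.bind fun s => q.bind fun t => mkS S (.app A s t)
  lm p := p.bind fun s => mkS S (.lam s)
  zero := 0
  succ j := ⟨min (j + 1) K, by omega⟩

theorem algS_idx (S : Set (NTree ν)) (K n : ℕ) : ((algS S K).idx n : ℕ) = min n K := by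
  induction n with
  | zero => simp [Alg.idx, algS]
  | succ n ih =>
    change min (((algS S K).idx n : ℕ) + 1) K = _
    rw [ih]; omega

theorem algS_fold (S : Set (NTree ν)) (K : ℕ)
    (hv : ∀ n, .var n ∈ S → n ≤ K) (ha : ∀ A s t, .app A s t ∈ S → s ∈ S ∧ t ∈ S)
    (hl : ∀ t, .lam t ∈ S → t ∈ S) (t : NTree ν) (ht : t ∈ S) :
    (algS S K).fold t = some ⟨t, ht⟩ := by
  induction t with
  | var n =>
    have : ((algS S K).idx n : ℕ) = n := by rw [algS_idx]; have := hv n ht; omega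
    change mkS S (.var ((algS S K).idx n : ℕ)) = _
    rw [this]
    simp [mkS, ht]
  | app A s t ih1 ih2 =>
    have h := ha _ _ _ ht
    simp only [Alg.fold]
    rw [ih1 h.1, ih2 h.2]
    simp [algS, mkS, ht]
  | lam t ih =>
    have h := hl _ ht
    simp only [Alg.fold]
    rw [ih h]
    simp [algS, mkS, ht]

/-- Finite completeness. -/
theorem finite_completeness {Γ : Ctx ν} {A : Ty ν} (a b : Tm Γ A) (hne : ¬ Eqv a b) :
    ∃ (X : Type) (_ : Finite X) (_ : Nonempty X) (ρ : Env X Γ), a.eval ρ ≠ b.eval ρ := by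
  obtain ⟨n, hn, en⟩ := exists_nf a
  obtain ⟨m, hm, em⟩ := exists_nf b
  have hnm : n.enc ≠ m.enc := by
    intro h
    have := Tm.enc_inj _ _ h
    subst this
    exact hne (en.trans em.symm)
  let S : Set (NTree ν) := {t | t ∈ n.enc.subs ++ m.enc.subs}
  have hS : Finite S := List.finite_toSet _
  let K := max n.enc.bound m.enc.bound
  have key := algS_fold S K
    (by
      intro k hk
      simp only [S, Set.mem_ofPred_eq, List.mem_append] at hk
      simp only [K, le_max_iff]
      exact hk.imp NTree.subs_var NTree.subs_var)
    (by
      intro A s t hk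
      simp only [S, Set.mem_ofPred_eq, List.mem_append] at hk ⊢
      rcases hk with hk | hk <;> have := NTree.subs_app hk <;> tauto)
    (by
      intro t hk
      simp only [S, Set.mem_ofPred_eq, List.mem_append] at hk ⊢
      exact hk.imp NTree.subs_lam NTree.subs_lam)
  refine ⟨Fin (K + 1) → Option S, inferInstance, ⟨fun _ => none⟩, (algS S K).std Γ, ?_⟩
  rw [en.eval, em.eval]
  intro h
  have h1 := ((algS S K).read hn).2 rfl
  have h2 := ((algS S K).read hm).2 rfl
  rw [h, h2, key _ (by simp [S, NTree.self_mem]), key _ (by simp [S, NTree.self_mem])] at h1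
  simp at h1
  exact hnm h1.symm

end Semantics

/-! ### Definability of the elements of finite full type structures -/

section Definability
variable {ν : Type} (D : Ty ν)

/-- `D → ⋯ → D → D` with `n` arguments. -/
def PTy : ℕ → Ty ν
  | 0 => D
  | n + 1 => .arrow D (PTy n)

def appP : ∀ (n : ℕ) {Γ : Ctx ν}, Tm Γ (PTy D n) → (Fin n → Tm Γ D) → Tm Γ D
  | 0, _, t, _ => t
  | n + 1, _, t, c => appP n (Tm.app t (c 0)) (fun i => c i.succ)

def kon : ∀ (n : ℕ) {Γ : Ctx ν}, Tm Γ D → Tm Γ (PTy D n)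
  | 0, _, d => d
  | n + 1, _, d => .lam (kon n (d.rename (fun _ => Var.vs)))

def proj : ∀ (n : ℕ) {Γ : Ctx ν}, Fin n → Tm Γ (PTy D n)
  | n + 1, _, ⟨0, _⟩ => .lam (kon D n (.var .vz))
  | n + 1, _, ⟨i + 1, h⟩ => .lam (proj n ⟨i, Nat.lt_of_succ_lt_succ h⟩)

theorem Tm.weaken_subst_ext {Γ Δ : Ctx ν} {A B : Ty ν} (d : Tm Γ A) (σ : Subst Γ Δ) :
    (d.rename (fun _ => Var.vs)).subst (Subst.ext σ B)
      = (d.subst σ).rename (fun _ => Var.vs) := by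
  rw [Tm.subst_rename, Tm.rename_subst]
  rfl

theorem kon_subst (n : ℕ) {Γ Δ : Ctx ν} (d : Tm Γ D) (σ : Subst Γ Δ) :
    (kon D n d).subst σ = kon D n (d.subst σ) := by
  induction n generalizing Γ Δ with
  | zero => rfl
  | succ n ih =>
    change Tm.lam ((kon D n _).subst _) = Tm.lam (kon D n _)
    rw [ih, Tm.weaken_subst_ext]

theorem proj_subst (n : ℕ) {Γ Δ : Ctx ν} (i : Fin n) (σ : Subst Γ Δ) :
    (proj D n i).subst σ = proj D n i := by
  induction n generalizing Γ Δ with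
  | zero => exact i.elim0
  | succ n ih =>
    rcases i with ⟨i, hi⟩
    cases i with
    | zero =>
      change Tm.lam ((kon D n _).subst _) = Tm.lam (kon D n _)
      rw [kon_subst]
      rfl
    | succ i =>
      change Tm.lam ((proj D n _).subst _) = Tm.lam (proj D n _)
      rw [ih]

theorem Tm.rename_eq_subst {Γ Δ : Ctx ν} {A : Ty ν} (t : Tm Γ A) (ρ : Ren Γ Δ) :
    t.rename ρ = t.subst (fun B v => .var (ρ B v)) := by
  conv_lhs => rw [← Tm.subst_var t, Tm.rename_subst]
  rfl

theorem proj_rename (n : ℕ) {Γ Δ : Ctx ν} (i : Fin n) (ρ : Ren Γ Δ) :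
    (proj D n i).rename ρ = proj D n i := by
  rw [Tm.rename_eq_subst, proj_subst]

theorem appP_subst (n : ℕ) {Γ Δ : Ctx ν} (t : Tm Γ (PTy D n)) (c : Fin n → Tm Γ D)
    (σ : Subst Γ Δ) :
    (appP D n t c).subst σ = appP D n (t.subst σ) (fun i => (c i).subst σ) := by
  induction n with
  | zero => rfl
  | succ n ih => exact ih _ _

theorem appP_congr (n : ℕ) {Γ : Ctx ν} {t t' : Tm Γ (PTy D n)} (h : Eqv t t')
    (c : Fin n → Tm Γ D) : Eqv (appP D n t c) (appP D n t' c) := by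
  induction n with
  | zero => exact h
  | succ n ih => exact ih (.congApp h (.refl _)) _

theorem appP_kon (n : ℕ) {Γ : Ctx ν} (d : Tm Γ D) (c : Fin n → Tm Γ D) :
    Eqv (appP D n (kon D n d) c) d := by
  induction n with
  | zero => exact .refl _
  | succ n ih =>
    have h : Eqv (Tm.app (kon D (n + 1) d) (c 0)) (kon D n d) := by
      have := Eqv.beta (kon D n (d.rename (fun _ => Var.vs))) (c 0)
      unfold Tm.subst1 at this
      rw [kon_subst] at this
      have e := Tm.subst1_weaken d (c 0)
      unfold Tm.subst1 at e
      rw [e] at this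
      exact this
    exact .trans (appP_congr D n h _) (ih _)

theorem appP_proj (n : ℕ) {Γ : Ctx ν} (i : Fin n) (c : Fin n → Tm Γ D) :
    Eqv (appP D n (proj D n i) c) (c i) := by
  induction n with
  | zero => exact i.elim0
  | succ n ih =>
    rcases i with ⟨i, hi⟩
    cases i with
    | zero =>
      have h : Eqv (Tm.app (proj D (n + 1) ⟨0, hi⟩) (c 0)) (kon D n (c 0)) := by
        have := Eqv.beta (kon D n (.var .vz)) (c 0)
        unfold Tm.subst1 at this
        rw [kon_subst] at this
        exact this
      exact .trans (appP_congr D n h _) (appP_kon D n _ _)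
    | succ i =>
      have h : Eqv (Tm.app (proj D (n + 1) ⟨i + 1, hi⟩) (c 0))
          (proj D n ⟨i, Nat.lt_of_succ_lt_succ hi⟩) := by
        have := Eqv.beta (proj D n ⟨i, Nat.lt_of_succ_lt_succ hi⟩) (c 0)
        unfold Tm.subst1 at this
        rw [proj_subst] at this
        exact this
      exact .trans (appP_congr D n h _) (ih _ _)

/-- Case distinction at a type ending in `D`. -/
def caseT (n : ℕ) : ∀ (Bs : List (Ty ν)) {Γ : Ctx ν}, Tm Γ (PTy D n) →
    (Fin n → Tm Γ (Ty.arrsR Bs D)) → Tm Γ (Ty.arrsR Bs D)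
  | [], _, x, c => appP D n x c
  | _ :: Bs, _, x, c => .lam (caseT n Bs (x.rename (fun _ => Var.vs))
      (fun i => .app (Tm.rename (fun _ => Var.vs) (c i)) (.var .vz)))

theorem caseT_subst (n : ℕ) (Bs : List (Ty ν)) {Γ Δ : Ctx ν} (x : Tm Γ (PTy D n))
    (c : Fin n → Tm Γ (Ty.arrsR Bs D)) (σ : Subst Γ Δ) :
    (caseT D n Bs x c).subst σ = caseT D n Bs (x.subst σ) (fun i => (c i).subst σ) := by
  induction Bs generalizing Γ Δ with
  | nil => exact appP_subst D n x c σ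
  | cons B Bs ih =>
    change Tm.lam ((caseT D n Bs _ _).subst _) = Tm.lam (caseT D n Bs _ _)
    rw [ih, Tm.weaken_subst_ext]
    congr 2
    funext i
    change Tm.app (Tm.subst _ (Tm.rename _ _)) _ = _
    exact congrArg (fun z => Tm.app z (Tm.var Var.vz))
      (Tm.weaken_subst_ext (A := Ty.arrow B (Ty.arrsR Bs D)) (c i) σ)

theorem caseT_proj (n : ℕ) (Bs : List (Ty ν)) {Γ : Ctx ν} {x : Tm Γ (PTy D n)} {i : Fin n}
    (h : Eqv x (proj D n i)) (c : Fin n → Tm Γ (Ty.arrsR Bs D)) :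
    Eqv (caseT D n Bs x c) (c i) := by
  induction Bs generalizing Γ with
  | nil => exact .trans (appP_congr D n h _) (appP_proj D n _ _)
  | cons B Bs ih =>
    have h' := h.rename (fun _ => Var.vs (B := B))
    rw [proj_rename] at h'
    exact .trans (.congLam (ih h' _)) (.eta _)

theorem split_base (n : ℕ) {T : Ty ν} (Bs : List (Ty ν)) (hT : T = Ty.arrsR Bs D)
    (t : Fin n → Tm ([] : Ctx ν) T) :
    ∃ u : Tm [] (Ty.arrow (PTy D n) T), ∀ i s, Eqv s (proj D n i) → Eqv (u.app s) (t i) := by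
  subst hT
  refine ⟨.lam (caseT D n Bs (.var .vz) (fun i => (t i).wk)), fun i s h => ?_⟩
  refine .trans (.beta _ _) ?_
  unfold Tm.subst1
  rw [caseT_subst]
  have := caseT_proj D n Bs h t
  simp only [Tm.wk_subst, Tm.wk_nil]
  exact this

/-- The type substitution. -/
abbrev sA (n : ℕ) : ν → Ty ν := fun _ => PTy D n

theorem PTy_arrsR (n : ℕ) : ∃ Bs, PTy D n = Ty.arrsR Bs D := by
  induction n with
  | zero => exact ⟨[], rfl⟩
  | succ n ih =>
    obtain ⟨Bs, h⟩ := ih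
    exact ⟨D :: Bs, by simp only [PTy, Ty.arrsR, h]⟩

theorem substA_arrsR (n : ℕ) (A : Ty ν) : ∃ Bs, A.substA (sA D n) = Ty.arrsR Bs D := by
  induction A with
  | atom p => exact PTy_arrsR D n
  | arrow A B _ ih =>
    obtain ⟨Bs, h⟩ := ih
    exact ⟨A.substA (sA D n) :: Bs, by simp only [Ty.substA, Ty.arrsR, h]⟩

variable {X : Type} {n : ℕ} (ei : X ≃ Fin n)

/-- The representation relation. -/
def RepR : ∀ A : Ty ν, Tm ([] : Ctx ν) (A.substA (sA D n)) → Sem X A → Prop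
  | .atom _, t, i => Eqv t (proj D n (ei i))
  | .arrow A B, t, F => ∀ (s : Tm [] (A.substA (sA D n))) (d : Sem X A), RepR A s d →
      RepR B (Tm.app t s) ((F : Sem X A → Sem X B) d)

theorem RepR.eqv {A : Ty ν} {t t' : Tm ([] : Ctx ν) (A.substA (sA D n))} {d : Sem X A}
    (e : Eqv t t') (h : RepR D ei A t d) : RepR D ei A t' d := by
  induction A with
  | atom p => exact .trans (.symm e) h
  | arrow A B _ ih =>
    intro s a hs
    exact ih (.congApp e (.refl _)) (h s a hs)

/-- The property that one can define functions by cases on `A` with values in `C`. -/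
def Split (A C : Ty ν) : Prop :=
  ∀ t : Sem X A → Tm ([] : Ctx ν) (C.substA (sA D n)),
    ∃ u : Tm ([] : Ctx ν) (.arrow (A.substA (sA D n)) (C.substA (sA D n))),
      ∀ s d, RepR D ei A s d → Eqv (u.app s) (t d)

theorem Sem.nonempty [Nonempty X] (A : Ty ν) : Nonempty (Sem X A) := by
  induction A with
  | atom p => exact ‹Nonempty X›
  | arrow A B _ ih => exact ih.elim fun b => ⟨(fun _ => b : Sem X A → Sem X B)⟩

theorem branch {A B C : Ty ν} (w : Tm ([] : Ctx ν) (.arrow B (.arrow (.arrow A B) C)))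
    (sa : Tm ([] : Ctx ν) A) : ∃ u : Tm ([] : Ctx ν) (.arrow (.arrow A B) C),
      ∀ s, Eqv (u.app s) (.app (.app w (.app s sa)) s) := by
  refine ⟨.lam (.app (.app w.wk (.app (.var .vz) sa.wk)) (.var .vz)), fun s => ?_⟩
  refine .trans (.beta _ _) ?_
  change Eqv (Tm.app (.app (Tm.subst1 w.wk s) (.app s (Tm.subst1 sa.wk s))) s) _
  rw [Tm.wk_subst1, Tm.wk_subst1, Tm.wk_nil, Tm.wk_nil]
  exact .refl _

open Classical in
theorem split_arrow [Nonempty X] {A B : Ty ν} (hA : ∀ d : Sem X A, ∃ t, RepR D ei A t d)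
    (hB : ∀ C, Split D ei B C) (C : Ty ν) (L : List (Sem X A))
    (t : (Sem X A → Sem X B) → Tm ([] : Ctx ν) (C.substA (sA D n)))
    (ht : ∀ F G, (∀ a ∈ L, F a = G a) → t F = t G) :
    ∃ u : Tm ([] : Ctx ν) (.arrow ((Ty.arrow A B).substA (sA D n)) (C.substA (sA D n))),
      ∀ s (F : Sem X A → Sem X B), RepR D ei (.arrow A B) s F → Eqv (u.app s) (t F) := by
  induction L generalizing t with
  | nil =>
    obtain ⟨b₀⟩ := Sem.nonempty (X := X) B
    refine ⟨.lam (t (fun _ => b₀)).wk, fun s F _ => ?_⟩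
    rw [ht F (fun _ => b₀) (by simp)]
    refine .trans (.beta _ _) ?_
    rw [Tm.wk_subst1, Tm.wk_nil]
    exact .refl _
  | cons a L ih =>
    have h1 : ∀ b : Sem X B,
        ∃ u : Tm ([] : Ctx ν) (.arrow ((Ty.arrow A B).substA (sA D n)) (C.substA (sA D n))),
        ∀ s (F : Sem X A → Sem X B), RepR D ei (.arrow A B) s F →
          Eqv (u.app s) (t (Function.update F a b)) := by
      intro b
      refine ih (fun F => t (Function.update F a b)) ?_
      intro F G hFG
      refine ht _ _ ?_
      intro a' ha'
      by_cases h : a' = a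
      · subst h; simp
      · simp only [Function.update_of_ne h]
        exact hFG a' (by simpa [h] using ha')
    choose u hu using h1
    obtain ⟨w, hw⟩ := hB (.arrow (.arrow A B) C) u
    obtain ⟨sa, hsa⟩ := hA a
    obtain ⟨v, hv⟩ := branch (A := A.substA (sA D n)) (B := B.substA (sA D n))
      (C := C.substA (sA D n)) w sa
    refine ⟨v, fun s F hs => ?_⟩
    refine .trans (hv s) ?_
    have h2 := hw (.app s sa) (F a) (hs sa a hsa)
    refine .trans (.congApp h2 (.refl _)) ?_
    have h3 := hu (F a) s F hs
    rw [Function.update_eq_self] at h3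
    exact h3

theorem definable [Finite X] [Nonempty X] (A : Ty ν) :
    (∀ d : Sem X A, ∃ t, RepR D ei A t d) ∧ ∀ C, Split D ei A C := by
  induction A with
  | atom p =>
    refine ⟨fun d => ⟨proj D n (ei d), .refl _⟩, fun C t => ?_⟩
    obtain ⟨Bs, h⟩ := substA_arrsR D n C
    obtain ⟨u, hu⟩ := split_base D n Bs h (fun i => t (ei.symm i))
    refine ⟨u, fun s d hs => ?_⟩
    have := hu (ei d) s hs
    have e : ei.symm (ei d) = d := ei.symm_apply_apply d
    exact e ▸ this
  | arrow A B ihA ihB =>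
    refine ⟨fun F => ?_, fun C t => ?_⟩
    · choose t ht using fun a => ihB.1 ((F : Sem X A → Sem X B) a)
      obtain ⟨u, hu⟩ := ihA.2 B t
      exact ⟨u, fun s d hs => RepR.eqv D ei (.symm (hu s d hs)) (ht d)⟩
    · have := Sem.finite X A
      obtain ⟨L, hL⟩ : ∃ L : List (Sem X A), ∀ a, a ∈ L := by
        have := Fintype.ofFinite (Sem X A)
        exact ⟨Finset.univ.toList, by simp⟩
      exact split_arrow D ei ihA.1 ihB.2 C L t
        (fun F G h => congrArg t (funext fun a => h a (hL a)))

theorem RepR.fund {Γ : Ctx ν} {A : Ty ν} (a : Tm Γ A)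
    (τ : Subst (Γ.map (Ty.substA (sA D n))) []) (ρ : Env X Γ)
    (h : ∀ B (v : Var Γ B), RepR D ei B (τ _ (v.substA (sA D n))) (ρ B v)) :
    RepR D ei A ((a.substA (sA D n)).subst τ) (a.eval ρ) := by
  induction a with
  | var v => exact h _ v
  | app f a ihf iha => exact ihf τ ρ h _ _ (iha τ ρ h)
  | lam b ih =>
    intro s d hs
    refine RepR.eqv D ei (.symm (.beta _ _)) ?_
    rw [Tm.subst1_ext]
    refine ih (Subst.cons s τ) (Env.cons d ρ) ?_
    intro B v
    cases v with
    | vz => exact hs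
    | vs w => exact h _ w

theorem exists_closing [Finite X] [Nonempty X] {Γ : Ctx ν} (ρ : Env X Γ) :
    ∃ τ : Subst (Γ.map (Ty.substA (sA D n))) [],
      ∀ B (v : Var Γ B), RepR D ei B (τ _ (v.substA (sA D n))) (ρ B v) := by
  induction Γ with
  | nil => exact ⟨fun B v => (nomatch v), fun B v => (nomatch v)⟩
  | cons A Γ ih =>
    obtain ⟨τ, hτ⟩ := ih (fun B v => ρ B (.vs v))
    obtain ⟨t, ht⟩ := (definable D ei A).1 (ρ A .vz)
    refine ⟨Subst.cons t τ, ?_⟩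
    intro B v
    cases v with
    | vz => exact ht
    | vs w => exact hτ _ w

/-! ### Applicative contexts -/

/-- `F` is, up to βη, application to a list of closed terms. -/
def Reach (T U : Ty ν) (F : Tm ([] : Ctx ν) T → Tm ([] : Ctx ν) U) : Prop :=
  ∃ (Bs : List (Ty ν)) (hs : HList ([] : Ctx ν) Bs) (he : T = Ty.arrsR Bs U),
    ∀ t : Tm [] T, Tm.apps (he ▸ t) hs = F t

theorem cast_app {T U B : Ty ν} (h : T = U) (h' : Ty.arrow B T = Ty.arrow B U)
    (t : Tm ([] : Ctx ν) (.arrow B T)) (s : Tm [] B) :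
    (h' ▸ t : Tm [] (.arrow B U)).app s = h ▸ (t.app s) := by
  subst h; rfl

theorem apps_snoc {A U : Ty ν} (h : Tm ([] : Ctx ν) A) {Bs : List (Ty ν)}
    (hs : HList ([] : Ctx ν) Bs) :
    ∃ (Bs' : List (Ty ν)) (hs' : HList ([] : Ctx ν) Bs')
      (he : Ty.arrsR Bs (.arrow A U) = Ty.arrsR Bs' U),
      ∀ t : Tm [] (Ty.arrsR Bs (.arrow A U)), Tm.apps (he ▸ t) hs' = (Tm.apps t hs).app h := by
  induction hs with
  | nil => exact ⟨[A], .cons h .nil, rfl, fun t => rfl⟩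
  | @cons B Bs b hs ih =>
    obtain ⟨Bs', hs', he, H⟩ := ih
    refine ⟨B :: Bs', .cons b hs', congrArg (Ty.arrow B) he, fun t => ?_⟩
    exact (congrArg (fun z => Tm.apps z hs')
      (cast_app he (congrArg (Ty.arrow B) he) t b)).trans (H (Tm.app t b))

theorem Reach.snoc {T A U : Ty ν} {F : Tm ([] : Ctx ν) T → Tm ([] : Ctx ν) (.arrow A U)}
    (hF : Reach T (.arrow A U) F) (h : Tm ([] : Ctx ν) A) :
    Reach T U (fun t => (F t).app h) := by
  obtain ⟨Bs, hs, he, H⟩ := hF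
  subst he
  obtain ⟨Bs', hs', he', H'⟩ := apps_snoc (U := U) h hs
  exact ⟨Bs', hs', he', fun t => (H' t).trans (congrArg (fun z => Tm.app z h) (H t))⟩

theorem reach_lamAll {Γ : Ctx ν} {C : Ty ν} (τ : Subst Γ []) :
    ∃ F, Reach (Ty.arrs Γ C) C F ∧ ∀ t : Tm Γ C, Eqv (F t.lamAll) (t.subst τ) := by
  induction Γ generalizing C with
  | nil =>
    refine ⟨fun t => t, ⟨[], .nil, rfl, fun t => rfl⟩, fun t => ?_⟩
    rw [Tm.closed_subst]
    exact .refl _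
  | cons A Γ ih =>
    obtain ⟨F, hF, H⟩ := ih (C := .arrow A C) (fun B v => τ B (.vs v))
    refine ⟨_, hF.snoc (τ A .vz), fun t => ?_⟩
    refine .trans (.congApp (H (.lam t)) (.refl _)) (.trans (.beta _ _) ?_)
    rw [Tm.subst1_ext]
    have : Subst.cons (τ A .vz) (fun B v => τ B (.vs v)) = τ := by
      funext B v; cases v <;> rfl
    rw [this]
    exact .refl _

theorem separate [Finite X] [Nonempty X] (A : Ty ν) {T : Ty ν}
    {F : Tm ([] : Ctx ν) T → Tm ([] : Ctx ν) (A.substA (sA D n))}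
    (hF : Reach T (A.substA (sA D n)) F) (d d' : Sem X A) (hd : d ≠ d') :
    ∃ (G : Tm ([] : Ctx ν) T → Tm ([] : Ctx ν) (PTy D n)) (i j : Fin n), i ≠ j ∧
      Reach T (PTy D n) G ∧ (∀ t, RepR D ei A (F t) d → Eqv (G t) (proj D n i)) ∧
      (∀ t, RepR D ei A (F t) d' → Eqv (G t) (proj D n j)) := by
  induction A with
  | atom p => exact ⟨F, ei d, ei d', fun h => hd (ei.injective h), hF, fun t h => h, fun t h => h⟩
  | arrow A B _ ihB =>
    obtain ⟨a, ha⟩ := Function.ne_iff.1 (show (d : Sem X A → Sem X B) ≠ d' from hd)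
    obtain ⟨s, hs⟩ := (definable D ei A).1 a
    obtain ⟨G, i, j, hij, hG, h1, h2⟩ := ihB (Reach.snoc hF s) _ _ ha
    exact ⟨G, i, j, hij, hG, fun t ht => h1 t (ht s a hs), fun t ht => h2 t (ht s a hs)⟩

theorem reach_appP {T : Ty ν} (m : ℕ) {F : Tm ([] : Ctx ν) T → Tm ([] : Ctx ν) (PTy D m)}
    (hF : Reach T (PTy D m) F) (c : Fin m → Tm ([] : Ctx ν) D) :
    Reach T D (fun t => appP D m (F t) c) := by
  induction m with
  | zero => exact hF
  | succ m ih => exact ih (Reach.snoc hF (c 0)) (fun i => c i.succ)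

end Definability

/--
**Theorem 6.2.** If `a` and `b` are of the same type and `a = b` is not provable in Λ,
then for every two terms `e` and `f` of the same type one can construct type-instances
`a′` and `b′` of `a` and `b` respectively, and closed terms `h₁, …, h_l` (`l ≥ 0`), and
also find variables `x₁, …, xₘ` (`m ≥ 0`, here: all the free variables of `a` and `b`,
i.e. the context `Γ`), such that `(λx₁…xₘ.a′)h₁…h_l e f = e` and
`(λx₁…xₘ.b′)h₁…h_l e f = f` are provable in Λ.
-/
theorem boehm_typed_lambda_refined {ν : Type} [Nonempty ν] {Γ : Ctx ν} {A : Ty ν}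
    (a b : Tm Γ A) (hne : ¬ Eqv a b) {Δ : Ctx ν} {E : Ty ν} (e f : Tm Δ E) :
    ∃ (σ : ν → Ty ν) (Bs : List (Ty ν)) (hs : HList ([] : Ctx ν) Bs)
      (he : Ty.arrs (Γ.map (Ty.substA σ)) (A.substA σ)
              = Ty.arrsR Bs (Ty.arrow E (Ty.arrow E E))),
      Eqv (((Tm.apps (he ▸ Tm.lamAll (a.substA σ)) hs).wk.app e).app f) e ∧
      Eqv (((Tm.apps (he ▸ Tm.lamAll (b.substA σ)) hs).wk.app e).app f) f := by
  obtain ⟨X, hX, hN, ρ, hρ⟩ := finite_completeness a b hne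
  obtain ⟨n, ⟨ei⟩⟩ := Finite.exists_equiv_fin X
  let D : Ty ν := .arrow E (.arrow E E)
  obtain ⟨τ, hτ⟩ := exists_closing D ei ρ
  obtain ⟨F, hF, HF⟩ := reach_lamAll (C := A.substA (sA D n)) τ
  obtain ⟨G, i, j, hij, hG, h1, h2⟩ := separate D ei A hF _ _ hρ
  have ha := h1 _ (RepR.eqv D ei (.symm (HF (a.substA (sA D n)))) (RepR.fund D ei a τ ρ hτ))
  have hb := h2 _ (RepR.eqv D ei (.symm (HF (b.substA (sA D n)))) (RepR.fund D ei b τ ρ hτ))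
  let π₁ : Tm ([] : Ctx ν) D := .lam (.lam (.var (.vs .vz)))
  let π₂ : Tm ([] : Ctx ν) D := .lam (.lam (.var .vz))
  let c : Fin n → Tm ([] : Ctx ν) D := fun k => if k = i then π₁ else π₂
  obtain ⟨Bs, hs, he, H⟩ := reach_appP D n hG c
  have ha' := Eqv.trans (appP_congr D n ha c) (appP_proj D n i c)
  have hb' := Eqv.trans (appP_congr D n hb c) (appP_proj D n j c)
  rw [← show _ = appP D n (G (a.substA (sA D n)).lamAll) c from H _] at ha'
  rw [← show _ = appP D n (G (b.substA (sA D n)).lamAll) c from H _] at hb'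
  have ci : c i = π₁ := if_pos rfl
  have cj : c j = π₂ := if_neg (Ne.symm hij)
  rw [ci] at ha'
  rw [cj] at hb'
  refine ⟨sA D n, Bs, hs, he, ?_, ?_⟩
  · refine .trans (.congApp (.congApp (ha'.rename _) (.refl _)) (.refl _)) ?_
    refine .trans (.congApp (.beta (.lam (.var (.vs .vz))) e) (.refl _)) ?_
    refine .trans (.beta (e.rename (fun _ => Var.vs)) f) ?_
    rw [Tm.subst1_weaken]
    exact .refl _
  · refine .trans (.congApp (.congApp (hb'.rename _) (.refl _)) (.refl _)) ?_
    refine .trans (.congApp (.beta (.lam (.var .vz)) e) (.refl _)) ?_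
    exact .beta (.var .vz) f
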